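/- The exact solution of the paper's numerical example does not belong to H¹ of its domain: with Ω = (−1,1) × (0,1) and u(x,y) = exp(−(x² + y²))·arg(x,y), the function u is differentiable at every point of Ω, but the function p ↦ ‖∇u(p)‖² is not Lebesgue-integrable on Ω (its integral is infinite); hence u ∉ H¹(Ω). -/

import Mathlib

/-!
In polar coordinates `u = e^{-r²} θ`, so `|∇u|² = u_r² + r⁻² u_θ² ≥ e^{-2r²} r⁻²`, which on `Ω` is
at least `e^{-4} r⁻²`. The function `r⁻²` is homogeneous of degree `-2` in dimension `2`, so its
integral is unchanged when the domain is scaled. Since `½ Ω ⊆ Ω`, a finite integral of `r⁻²` over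
`Ω` would vanish on `Ω \ ½ Ω`, which has positive measure.
-/

open Real MeasureTheory

/-- The principal argument as a function of Cartesian coordinates `(x, y)`. -/
noncomputable def planeArg (x y : ℝ) : ℝ := Complex.arg ((x : ℂ) + (y : ℂ) * Complex.I)

/-- The exact solution of the paper's numerical example:
`u(x,y) = exp(−(x²+y²))·arg(x,y)`, i.e. `u = e^{−r²} θ` in polar coordinates. -/
noncomputable def exampleSol (x y : ℝ) : ℝ := Real.exp (-(x ^ 2 + y ^ 2)) * planeArg x y

open Module Set
open scoped ENNReal Pointwise

section Homogeneous

variable {E : Type*} [NormedAddCommGroup E] [NormedSpace ℝ E] [FiniteDimensional ℝ E]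
  [MeasurableSpace E] [BorelSpace E] (μ : Measure E) [μ.IsAddHaarMeasure] {c : ℝ} {s : Set E}

theorem setLIntegral_smul_set (hc : c ≠ 0) (f : E → ℝ≥0∞) (s : Set E) :
    ∫⁻ x in c • s, f x ∂μ = ENNReal.ofReal |c ^ finrank ℝ E| * ∫⁻ x in s, f (c • x) ∂μ := by
  have hemb : MeasurableEmbedding (c • · : E → E) := measurableEmbedding_const_smul₀ hc
  have hpre : (c • ·) ⁻¹' (c • s) = s := preimage_image_eq s hemb.injective
  have hmap : ∫⁻ x in s, f (c • x) ∂μ =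
      ENNReal.ofReal |(c ^ finrank ℝ E)⁻¹| * ∫⁻ x in c • s, f x ∂μ := by
    rw [← smul_eq_mul, ← lintegral_smul_measure, ← Measure.restrict_smul,
      ← Measure.map_addHaar_smul μ hc, hemb.restrict_map, hpre, hemb.lintegral_map]
  rw [hmap, ← mul_assoc, ← ENNReal.ofReal_mul (abs_nonneg _), ← abs_mul,
    mul_inv_cancel₀ (pow_ne_zero _ hc), abs_one, ENNReal.ofReal_one, one_mul]

theorem measure_smul_set_lt [Nontrivial E] (hc : |c| < 1) (hs₀ : μ s ≠ 0) (hs : μ s ≠ ∞) :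
    μ (c • s) < μ s := by
  have hscale : ENNReal.ofReal |c ^ finrank ℝ E| < 1 := by
    rw [ENNReal.ofReal_lt_one, abs_pow]
    exact pow_lt_one₀ (abs_nonneg c) hc finrank_pos.ne'
  simpa only [Measure.addHaar_smul, one_mul] using ENNReal.mul_lt_mul_left hs₀ hs hscale

theorem setLIntegral_eq_top_of_homogeneous [Nontrivial E] {f : E → ℝ≥0∞} (hf : Measurable f)
    (hs : MeasurableSet s) (hs₀ : μ s ≠ 0) (hs_top : μ s ≠ ∞)
    (hc : |c| < 1) (hcs : c • s ⊆ s) (hf₀ : ∀ x ∈ s, f x ≠ 0)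
    (hfc : ∀ x ∈ s, ENNReal.ofReal |c ^ finrank ℝ E| * f (c • x) = f x) :
    ∫⁻ x in s, f x ∂μ = ∞ := by
  have hc₀ : c ≠ 0 := by
    rintro rfl
    obtain ⟨x, hx⟩ := nonempty_of_measure_ne_zero hs₀
    exact hf₀ x hx (by simpa [finrank_pos.ne'] using (hfc x hx).symm)
  have hscale : ∫⁻ x in c • s, f x ∂μ = ∫⁻ x in s, f x ∂μ := by
    rw [setLIntegral_smul_set μ hc₀, ← lintegral_const_mul' _ _ ENNReal.ofReal_ne_top]
    exact setLIntegral_congr_fun hs hfc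
  have hsplit : ∫⁻ x in s, f x ∂μ + ∫⁻ x in s \ c • s, f x ∂μ = ∫⁻ x in s, f x ∂μ := by
    simpa only [inter_eq_right.2 hcs, hscale] using
      lintegral_inter_add_sdiff (μ := μ) f s (hs.const_smul_of_ne_zero hc₀)
  have hpos : 0 < ∫⁻ x in s \ c • s, f x ∂μ := by
    have hsupp : s \ c • s ⊆ Function.support f := fun x hx => hf₀ x hx.1
    rw [setLIntegral_pos_iff hf, inter_eq_right.2 hsupp]
    exact (tsub_pos_of_lt (measure_smul_set_lt μ hc hs₀ hs_top)).trans_le le_measure_sdiff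
  by_contra hfin
  exact hpos.ne' ((ENNReal.add_right_inj hfin).1 (hsplit.trans (add_zero _).symm))

end Homogeneous

theorem setLIntegral_inv_sq_add_sq_eq_top {s : Set (ℝ × ℝ)} {c : ℝ} (hs : MeasurableSet s)
    (hs₀ : volume s ≠ 0) (hs_top : volume s ≠ ∞) (hc : |c| < 1) (hcs : c • s ⊆ s)
    (h0 : (0 : ℝ × ℝ) ∉ s) :
    ∫⁻ p in s, ENNReal.ofReal (p.1 ^ 2 + p.2 ^ 2)⁻¹ = ∞ := by
  refine setLIntegral_eq_top_of_homogeneous volume (by fun_prop) hs hs₀ hs_top hc hcs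
    (fun p hp => ?_) (fun p hp => ?_)
  · have hp₀ : p.1 ≠ 0 ∨ p.2 ≠ 0 := by
      contrapose! h0
      rwa [← show p = 0 from Prod.ext h0.1 h0.2]
    have hr : 0 < p.1 ^ 2 + p.2 ^ 2 := by
      rcases hp₀ with h | h <;> positivity
    exact (ENNReal.ofReal_pos.2 (inv_pos.2 hr)).ne'
  · have hc₀ : c ≠ 0 := by
      rintro rfl
      exact h0 (by simpa only [zero_smul] using hcs (smul_mem_smul_set hp))
    rw [← ENNReal.ofReal_mul (abs_nonneg _)]
    congr 1
    simp only [finrank_prod, finrank_self, Nat.reduceAdd, abs_pow, sq_abs, Prod.smul_fst,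
      Prod.smul_snd, smul_eq_mul, mul_pow, ← mul_add, mul_inv_rev]
    field_simp

section PolarGradient

variable {p : ℝ × ℝ}

theorem hasFDerivAt_planeArg (hp : (p.1 : ℂ) + p.2 * Complex.I ∈ Complex.slitPlane) :
    HasFDerivAt (fun q : ℝ × ℝ => planeArg q.1 q.2)
      ((p.1 ^ 2 + p.2 ^ 2)⁻¹ •
        (p.1 • ContinuousLinearMap.snd ℝ ℝ ℝ - p.2 • ContinuousLinearMap.fst ℝ ℝ ℝ)) p := by
  have hz : HasFDerivAt (fun q : ℝ × ℝ => (q.1 : ℂ) + q.2 * Complex.I)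
      (Complex.equivRealProdCLM.symm : ℝ × ℝ →L[ℝ] ℂ) p := by
    simpa only [← Complex.equivRealProdCLM_symm_apply] using
      Complex.equivRealProdCLM.symm.hasFDerivAt
  have hlog : (fun q : ℝ × ℝ => planeArg q.1 q.2) =
      Complex.imCLM ∘ Complex.log ∘ fun q : ℝ × ℝ => (q.1 : ℂ) + q.2 * Complex.I :=
    funext fun _ => (Complex.log_im _).symm
  have harg := Complex.imCLM.hasFDerivAt.comp p
    ((Complex.hasStrictFDerivAt_log_real hp).hasFDerivAt.comp p hz)
  rw [hlog]
  refine harg.congr_fderiv (ContinuousLinearMap.ext fun v => ?_)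
  simp only [ContinuousLinearMap.smul_comp, ContinuousLinearMap.comp_apply, smul_apply,
    ContinuousLinearEquiv.coe_coe, one_apply_eq_self, smul_eq_mul, Complex.imCLM_apply,
    Complex.mul_im, Complex.inv_re, Complex.inv_im, Complex.normSq_add_mul_I,
    Complex.add_re, Complex.add_im, Complex.re_ofReal_mul, Complex.ofReal_re, Complex.ofReal_im,
    Complex.I_re, Complex.I_im, mul_zero, mul_one, add_zero, zero_add,
    Complex.equivRealProdCLM_symm_apply_re, Complex.equivRealProdCLM_symm_apply_im, sub_apply,
    ContinuousLinearMap.coe_fst', ContinuousLinearMap.coe_snd']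
  ring

/-- The product rule for `φ(r²) θ`, with `d(r²) = 2 (x dx + y dy)` and
`dθ = r⁻² (x dy - y dx)`. -/
theorem hasFDerivAt_radial_mul_planeArg {φ : ℝ → ℝ} {φ' : ℝ}
    (hφ : HasDerivAt φ φ' (p.1 ^ 2 + p.2 ^ 2))
    (hp : (p.1 : ℂ) + p.2 * Complex.I ∈ Complex.slitPlane) :
    HasFDerivAt (fun q : ℝ × ℝ => φ (q.1 ^ 2 + q.2 ^ 2) * planeArg q.1 q.2)
      ((2 * φ' * planeArg p.1 p.2) •
          (p.1 • ContinuousLinearMap.fst ℝ ℝ ℝ + p.2 • ContinuousLinearMap.snd ℝ ℝ ℝ) +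
        (φ (p.1 ^ 2 + p.2 ^ 2) * (p.1 ^ 2 + p.2 ^ 2)⁻¹) •
          (p.1 • ContinuousLinearMap.snd ℝ ℝ ℝ - p.2 • ContinuousLinearMap.fst ℝ ℝ ℝ)) p := by
  have hx : HasFDerivAt (fun q : ℝ × ℝ => q.1) (ContinuousLinearMap.fst ℝ ℝ ℝ) p := hasFDerivAt_fst
  have hy : HasFDerivAt (fun q : ℝ × ℝ => q.2) (ContinuousLinearMap.snd ℝ ℝ ℝ) p := hasFDerivAt_snd
  have hr := (hx.pow 2).add (hy.pow 2)
  refine ((hφ.comp_hasFDerivAt p hr).mul (hasFDerivAt_planeArg hp)).congr_fderiv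
    (ContinuousLinearMap.ext fun v => ?_)
  simp only [Function.comp_apply, Pi.add_apply, Nat.add_one_sub_one, pow_one, nsmul_eq_mul,
    Nat.cast_ofNat, smul_add, add_apply, smul_apply, sub_apply, smul_eq_mul,
    ContinuousLinearMap.coe_fst', ContinuousLinearMap.coe_snd']
  ring

/-- The squared Euclidean norm of the gradient of `u`, as the sum of the squared partial
derivatives; Mathlib's operator norm on the dual of `ℝ × ℝ` would be the `ℓ¹` norm. -/
noncomputable def sqNormGrad (u : ℝ → ℝ → ℝ) (p : ℝ × ℝ) : ℝ :=
  deriv (fun s => u s p.2) p.1 ^ 2 + deriv (fun t => u p.1 t) p.2 ^ 2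

theorem sqNormGrad_eq_of_hasFDerivAt {u : ℝ → ℝ → ℝ} {L : ℝ × ℝ →L[ℝ] ℝ}
    (hu : HasFDerivAt (fun q : ℝ × ℝ => u q.1 q.2) L p) :
    sqNormGrad u p = L (1, 0) ^ 2 + L (0, 1) ^ 2 := by
  have hx : HasDerivAt (fun s => u s p.2) (L (1, 0)) p.1 :=
    HasFDerivAt.comp_hasDerivAt p.1 (f := fun s => (s, p.2)) hu
      (hasFDerivAt_prodMk_left p.1 p.2).hasDerivAt
  have hy : HasDerivAt (fun t => u p.1 t) (L (0, 1)) p.2 :=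
    HasFDerivAt.comp_hasDerivAt p.2 (f := fun t => (p.1, t)) hu
      (hasFDerivAt_prodMk_right p.1 p.2).hasDerivAt
  rw [sqNormGrad, hx.deriv, hy.deriv]

/-- The polar formula `|∇v|² = v_r² + r⁻² v_θ²` for `v = φ(r²) θ`. -/
theorem sqNormGrad_radial_mul_planeArg {φ : ℝ → ℝ} {φ' : ℝ}
    (hφ : HasDerivAt φ φ' (p.1 ^ 2 + p.2 ^ 2))
    (hp : (p.1 : ℂ) + p.2 * Complex.I ∈ Complex.slitPlane) :
    sqNormGrad (fun x y => φ (x ^ 2 + y ^ 2) * planeArg x y) p =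
      4 * (p.1 ^ 2 + p.2 ^ 2) * (φ' * planeArg p.1 p.2) ^ 2 +
        φ (p.1 ^ 2 + p.2 ^ 2) ^ 2 * (p.1 ^ 2 + p.2 ^ 2)⁻¹ := by
  have hr : p.1 ^ 2 + p.2 ^ 2 ≠ 0 := by
    rw [← Complex.normSq_add_mul_I]
    exact (Complex.normSq_pos.2 (Complex.slitPlane_ne_zero hp)).ne'
  rw [sqNormGrad_eq_of_hasFDerivAt (hasFDerivAt_radial_mul_planeArg hφ hp)]
  simp only [smul_add, add_apply, sub_apply, smul_apply, smul_eq_mul, mul_one, mul_zero, mul_neg,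
    add_zero, zero_add, sub_zero, zero_sub, ContinuousLinearMap.coe_fst',
    ContinuousLinearMap.coe_snd']
  field_simp
  ring

end PolarGradient

section ExampleSol

theorem hasDerivAt_exp_neg (t : ℝ) : HasDerivAt (fun t => exp (-t)) (-exp (-t)) t := by
  simpa using (hasDerivAt_neg t).exp

variable {p : ℝ × ℝ}

theorem differentiableAt_exampleSol (hp : (p.1 : ℂ) + p.2 * Complex.I ∈ Complex.slitPlane) :
    DifferentiableAt ℝ (fun q : ℝ × ℝ => exampleSol q.1 q.2) p :=
  (hasFDerivAt_radial_mul_planeArg (hasDerivAt_exp_neg _) hp).differentiableAt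

theorem exp_sq_mul_inv_le_sqNormGrad_exampleSol
    (hp : (p.1 : ℂ) + p.2 * Complex.I ∈ Complex.slitPlane) :
    exp (-(p.1 ^ 2 + p.2 ^ 2)) ^ 2 * (p.1 ^ 2 + p.2 ^ 2)⁻¹ ≤ sqNormGrad exampleSol p := by
  refine le_of_le_of_eq (le_add_of_nonneg_left ?_)
    (sqNormGrad_radial_mul_planeArg (hasDerivAt_exp_neg _) hp).symm
  positivity

theorem setLIntegral_sqNormGrad_exampleSol_eq_top {s : Set (ℝ × ℝ)} {c : ℝ}
    (hs : MeasurableSet s) (hs₀ : volume s ≠ 0) (hs_bdd : Bornology.IsBounded s)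
    (hc : |c| < 1) (hcs : c • s ⊆ s)
    (hs_slit : ∀ p ∈ s, (p.1 : ℂ) + p.2 * Complex.I ∈ Complex.slitPlane) :
    ∫⁻ p in s, ENNReal.ofReal (sqNormGrad exampleSol p) = ∞ := by
  obtain ⟨R, hR⟩ := hs_bdd.exists_norm_le
  have hlower : ∀ p ∈ s,
      exp (-(R ^ 2 + R ^ 2)) ^ 2 * (p.1 ^ 2 + p.2 ^ 2)⁻¹ ≤ sqNormGrad exampleSol p := by
    intro p hp
    have hx : p.1 ^ 2 ≤ R ^ 2 := sq_le_sq.2 <|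
      ((norm_fst_le p).trans (hR p hp)).trans (le_abs_self R)
    have hy : p.2 ^ 2 ≤ R ^ 2 := sq_le_sq.2 <|
      ((norm_snd_le p).trans (hR p hp)).trans (le_abs_self R)
    refine le_trans ?_ (exp_sq_mul_inv_le_sqNormGrad_exampleSol (hs_slit p hp))
    gcongr
  have hzero : (0 : ℝ × ℝ) ∉ s := fun h => Complex.slitPlane_ne_zero (hs_slit 0 h) (by simp)
  have hdiv : ∫⁻ p in s,
      ENNReal.ofReal (exp (-(R ^ 2 + R ^ 2)) ^ 2 * (p.1 ^ 2 + p.2 ^ 2)⁻¹) = ∞ := by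
    have hexp : 0 < exp (-(R ^ 2 + R ^ 2)) ^ 2 := by positivity
    simp_rw [ENNReal.ofReal_mul hexp.le]
    rw [lintegral_const_mul' _ _ ENNReal.ofReal_ne_top, setLIntegral_inv_sq_add_sq_eq_top hs hs₀
      hs_bdd.measure_lt_top.ne hc hcs hzero, ENNReal.mul_top (ENNReal.ofReal_pos.2 hexp).ne']
  exact eq_top_mono (setLIntegral_mono' hs fun p hp => ENNReal.ofReal_le_ofReal (hlower p hp)) hdiv

end ExampleSol

theorem half_smul_Ioo_prod_Ioo_subset :
    (1 / 2 : ℝ) • (Ioo (-1 : ℝ) 1 ×ˢ Ioo (0 : ℝ) 1) ⊆ Ioo (-1) 1 ×ˢ Ioo 0 1 := by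
  rintro _ ⟨p, ⟨⟨hx₁, hx₂⟩, hy₁, hy₂⟩, rfl⟩
  refine ⟨⟨?_, ?_⟩, ?_, ?_⟩ <;> simp only [Prod.smul_fst, Prod.smul_snd, smul_eq_mul] <;> linarith

/-- The example solution does not belong to `H¹(Ω)` for `Ω = (−1,1) × (0,1)`:
`u` is differentiable at every point of `Ω`, but the squared Euclidean norm of its
gradient, `(∂u/∂x)² + (∂u/∂y)²`, is not Lebesgue-integrable on `Ω` — indeed its
integral is infinite. -/
theorem exampleSol_not_H1 :
    (∀ p ∈ (Set.Ioo (-1 : ℝ) 1 ×ˢ Set.Ioo (0 : ℝ) 1),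
      DifferentiableAt ℝ (fun q : ℝ × ℝ => exampleSol q.1 q.2) p) ∧
    ¬ IntegrableOn
        (fun p : ℝ × ℝ =>
          (deriv (fun s : ℝ => exampleSol s p.2) p.1) ^ 2
            + (deriv (fun t : ℝ => exampleSol p.1 t) p.2) ^ 2)
        (Set.Ioo (-1 : ℝ) 1 ×ˢ Set.Ioo (0 : ℝ) 1) ∧
    ∫⁻ p in (Set.Ioo (-1 : ℝ) 1 ×ˢ Set.Ioo (0 : ℝ) 1),
        ENNReal.ofReal
          ((deriv (fun s : ℝ => exampleSol s p.2) p.1) ^ 2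
            + (deriv (fun t : ℝ => exampleSol p.1 t) p.2) ^ 2) = ⊤ := by
  have hslit : ∀ p ∈ Ioo (-1 : ℝ) 1 ×ˢ Ioo (0 : ℝ) 1,
      (p.1 : ℂ) + p.2 * Complex.I ∈ Complex.slitPlane := fun p hp =>
    Complex.mem_slitPlane_iff.2 (.inr (by simpa using hp.2.1.ne'))
  have hvol : volume (Ioo (-1 : ℝ) 1 ×ˢ Ioo (0 : ℝ) 1) ≠ 0 :=
    ((isOpen_Ioo.prod isOpen_Ioo).measure_pos volume (by simp)).ne'
  have htop := setLIntegral_sqNormGrad_exampleSol_eq_top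
    (measurableSet_Ioo.prod measurableSet_Ioo) hvol
    ((Metric.isBounded_Ioo _ _).prod (Metric.isBounded_Ioo _ _))
    (by norm_num [abs_of_pos]) half_smul_Ioo_prod_Ioo_subset hslit
  exact ⟨fun p hp => differentiableAt_exampleSol (hslit p hp),
    fun hint => hint.lintegral_lt_top.ne htop, htop⟩
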